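/- For every cyclic sentence S over the alphabet {A, X, B}, one has |S| = |S̄|, where S̄ denotes the cyclic sentence obtained by reversing the string. -/

import Mathlib

/-!
The "tight puzzle" of Schwartz–Tabachnikov.  Strings over the alphabet `{A, X, B}`;
word list (coefficient, weight): `X (1,0)`, `XA (1,1)`, `XAA (1,1)`, `AXA (2,1)`,
`AAA (-1,1)`, `BA (-1,1)`, `ABA (-1,1)`, `XXA (-1,1)`; in a parsing the word `X` may
never be immediately followed by the word `XA` or the word `BA`.
-/

open scoped Classical

/-- The three-letter alphabet. -/
inductive PLetter | A | X | B
deriving DecidableEq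

/-- Strings over the alphabet. -/
abbrev PWord := List PLetter

/-- The tight puzzle word list. -/
def tightWords : List PWord :=
  [[PLetter.X], [PLetter.X, PLetter.A], [PLetter.X, PLetter.A, PLetter.A],
   [PLetter.A, PLetter.X, PLetter.A], [PLetter.A, PLetter.A, PLetter.A],
   [PLetter.B, PLetter.A], [PLetter.A, PLetter.B, PLetter.A],
   [PLetter.X, PLetter.X, PLetter.A]]

/-- Coefficients of the words of the tight puzzle (`AXA ↦ 2`; `AAA, BA, ABA, XXA ↦ -1`;
`X, XA, XAA ↦ 1`). -/
def tightCoeff (w : PWord) : ℤ :=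
  if w = [PLetter.A, PLetter.X, PLetter.A] then 2
  else if w = [PLetter.A, PLetter.A, PLetter.A] ∨ w = [PLetter.B, PLetter.A] ∨
      w = [PLetter.A, PLetter.B, PLetter.A] ∨ w = [PLetter.X, PLetter.X, PLetter.A] then -1
  else 1

/-- Weights of the words: the word `X` has weight `0`, all other words weight `1`. -/
def wordWt (w : PWord) : ℕ := if w = [PLetter.X] then 0 else 1

/-- The forbidden adjacency: the word `X` immediately followed by `XA` or `BA`. -/
def Bad (u v : PWord) : Prop :=
  u = [PLetter.X] ∧ (v = [PLetter.X, PLetter.A] ∨ v = [PLetter.B, PLetter.A])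

/-- The contribution `coefficient · t^weight ∈ ℤ[t]` of a parsing `L`. -/
noncomputable def parseVal (c : PWord → ℤ) (L : List PWord) : Polynomial ℤ :=
  Polynomial.C ((L.map c).prod) * Polynomial.X ^ ((L.map wordWt).sum)

/-- `L` is a parsing in the tight puzzle: all its words are on the word list and the
forbidden adjacency never occurs. -/
def TightChain (L : List PWord) : Prop :=
  (∀ w ∈ L, w ∈ tightWords) ∧ List.Chain' (fun u v => ¬ Bad u v) L

/-- The *core* of a string: what remains after deleting all leading and trailing `X`s. -/
def core (s : PWord) : PWord :=
  ((s.dropWhile (· == PLetter.X)).reverse.dropWhile (· == PLetter.X)).reverse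

/-- `L` is a parsing of the bi-infinite string `⋯XX·W·XX⋯` (with the infinitely many
padding `X`s parsed as copies of the word `X` and trimmed away): the words of `L`
concatenate to `W` up to padding by `X`s on either side, `L` neither starts nor ends
with the word `X`, and (because of the padding `X`-words on the left) the first word
of `L` is not `XA` or `BA`. -/
def IsOpenParsing (W : PWord) (L : List PWord) : Prop :=
  TightChain L ∧ core L.flatten = core W ∧
  ∀ h : L ≠ [],
    L.head h ≠ [PLetter.X] ∧ L.head h ≠ [PLetter.X, PLetter.A] ∧
    L.head h ≠ [PLetter.B, PLetter.A] ∧ L.getLast h ≠ [PLetter.X]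

/-- `(r, L)` is a parsing of the cyclic string `(W)`: reading the necklace of the
letters of `W` starting at position `r`, the words of `L` concatenate to it, the
forbidden adjacency does not occur (cyclically), and `r < (last word).length`
(so that every parsing of the necklace is counted exactly once). -/
def IsCyclicParsing (W : PWord) (r : ℕ) (L : List PWord) : Prop :=
  TightChain L ∧
  ∃ h : L ≠ [], L.flatten = W.rotate r ∧ r < (L.getLast h).length ∧
    ¬ Bad (L.getLast h) (L.head h)

/-- `L` is a parsing of the locked string `[W]`: the words of `L` concatenate exactly
to `W`, no padding allowed. -/
def IsLockedParsing (W : PWord) (L : List PWord) : Prop :=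
  TightChain L ∧ L.flatten = W

/-- The nine words of both puzzles, as a function (used to enumerate parsings). -/
def wordOf : Fin 9 → PWord :=
  ![[PLetter.X], [PLetter.X, PLetter.A], [PLetter.X, PLetter.A, PLetter.A],
    [PLetter.X, PLetter.B, PLetter.A], [PLetter.A, PLetter.X, PLetter.A],
    [PLetter.A, PLetter.A, PLetter.A], [PLetter.B, PLetter.A],
    [PLetter.A, PLetter.B, PLetter.A], [PLetter.X, PLetter.X, PLetter.A]]

/-- The open value `|W| ∈ ℤ[t]`: the sum of `coefficient · t^weight` over all parsings
of the bi-infinite string `⋯XX·W·XX⋯` (any such parsing consists of at most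
`W.length + 2` words). -/
noncomputable def openVal (W : PWord) : Polynomial ℤ :=
  ∑ k ∈ Finset.range (W.length + 3), ∑ f : Fin k → Fin 9,
    if IsOpenParsing W ((List.ofFn f).map wordOf) then
      parseVal tightCoeff ((List.ofFn f).map wordOf)
    else 0

/-- The cyclic value `|(W)| ∈ ℤ[t]`: the sum of `coefficient · t^weight` over all
parsings of the cyclic string `(W)`. -/
noncomputable def cycVal (W : PWord) : Polynomial ℤ :=
  ∑ r ∈ Finset.range W.length, ∑ k ∈ Finset.range (W.length + 1), ∑ f : Fin k → Fin 9,
    if IsCyclicParsing W r ((List.ofFn f).map wordOf) then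
      parseVal tightCoeff ((List.ofFn f).map wordOf)
    else 0

/-- The locked value `|[W]| ∈ ℤ[t]`: the sum of `coefficient · t^weight` over all
parsings whose concatenation is exactly `W`. -/
noncomputable def lockVal (W : PWord) : Polynomial ℤ :=
  ∑ k ∈ Finset.range (W.length + 1), ∑ f : Fin k → Fin 9,
    if IsLockedParsing W ((List.ofFn f).map wordOf) then
      parseVal tightCoeff ((List.ofFn f).map wordOf)
    else 0

/-- The original puzzle word list (the tight list together with `XBA`). -/
def origWords : List PWord :=
  tightWords ++ [[PLetter.X, PLetter.B, PLetter.A]]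

/-- Coefficients of the words of the original puzzle (`AXA ↦ 2`; `XXA ↦ -2`;
`AAA, BA, ABA ↦ -1`; `X, XA, XAA, XBA ↦ 1`). -/
def origCoeff (w : PWord) : ℤ :=
  if w = [PLetter.A, PLetter.X, PLetter.A] then 2
  else if w = [PLetter.X, PLetter.X, PLetter.A] then -2
  else if w = [PLetter.A, PLetter.A, PLetter.A] ∨ w = [PLetter.B, PLetter.A] ∨
      w = [PLetter.A, PLetter.B, PLetter.A] then -1
  else 1

/-- `(r, L)` is a parsing of the cyclic string `(W)` in the original puzzle (all
parsings allowed, no adjacency restriction): reading the necklace of the letters of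
`W` starting at position `r`, the words of `L` concatenate to it, and
`r < (last word).length` (so that every parsing of the necklace is counted exactly
once). -/
def IsOrigCyclicParsing (W : PWord) (r : ℕ) (L : List PWord) : Prop :=
  (∀ w ∈ L, w ∈ origWords) ∧
  ∃ h : L ≠ [], L.flatten = W.rotate r ∧ r < (L.getLast h).length

/-- The cyclic value `|(W)| ∈ ℤ[t]` in the original puzzle. -/
noncomputable def origCycVal (W : PWord) : Polynomial ℤ :=
  ∑ r ∈ Finset.range W.length, ∑ k ∈ Finset.range (W.length + 1), ∑ f : Fin k → Fin 9,
    if IsOrigCyclicParsing W r ((List.ofFn f).map wordOf) then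
      parseVal origCoeff ((List.ofFn f).map wordOf)
    else 0

section TraceReversal

open Polynomial

/-- Transfer matrix of a letter. The states are the parts of the current word that remain
to be read: nothing, `A`, `AA`, `BA`, `XA`, in this order. -/
noncomputable def transfer : PLetter → Matrix (Fin 5) (Fin 5) ℤ[X]
  | .X => !![1, X, X, X, -2 * X; 0, 0, 0, 0, 0; 0, 0, 0, 0, 0; 0, 0, 0, 0, 0; 0, 1, 0, 0, 0]
  | .A => !![0, 0, -X, -X, 2 * X; 1, 0, 0, 0, 0; 0, 1, 0, 0, 0; 0, 0, 0, 0, 0; 0, 0, 0, 0, 0]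
  | .B => !![0, -X, 0, 0, 0; 0, 0, 0, 0, 0; 0, 0, 0, 0, 0; 0, 1, 0, 0, 0; 0, 0, 0, 0, 0]

/-- Basis of a row space that contains all rows of all transfer matrices. -/
noncomputable def rowBasis : Matrix (Fin 3) (Fin 5) ℤ[X] :=
  !![1, 0, 0, 0, 0; 0, 1, 0, 0, 0; 0, 0, 1, 1, -2]

/-- Coordinates of the rows of the transfer matrices with respect to `rowBasis`. -/
noncomputable def rowCoords : PLetter → Matrix (Fin 5) (Fin 3) ℤ[X]
  | .X => !![1, X, X; 0, 0, 0; 0, 0, 0; 0, 0, 0; 0, 1, 0]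
  | .A => !![0, 0, -X; 1, 0, 0; 0, 1, 0; 0, 0, 0; 0, 0, 0]
  | .B => !![0, -X, 0; 0, 0, 0; 0, 0, 0; 0, 1, 0; 0, 0, 0]

/-- The transfer matrix of a letter restricted to the span of `rowBasis`. -/
noncomputable def reducedTransfer (s : PLetter) : Matrix (Fin 3) (Fin 3) ℤ[X] :=
  rowBasis * rowCoords s

/-- A form for which all reduced transfer matrices are self-adjoint. -/
noncomputable def adjointForm : Matrix (Fin 3) (Fin 3) ℤ[X] :=
  !![1, -X, X; -X, X, -X; X, -X, X ^ 2]

lemma transfer_eq (s : PLetter) : transfer s = rowCoords s * rowBasis := by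
  cases s <;> refine Matrix.ext fun i j => ?_ <;> fin_cases i <;> fin_cases j <;>
    simp [transfer, rowCoords, rowBasis, Matrix.mul_apply, Fin.sum_univ_succ] <;> ring

lemma rowBasis_mul_prod (W : PWord) :
    rowBasis * (W.map transfer).prod = (W.map reducedTransfer).prod * rowBasis := by
  induction W with
  | nil => simp
  | cons s W ih =>
    simp only [List.map_cons, List.prod_cons, Matrix.mul_assoc, ← ih]
    simp only [transfer_eq s, reducedTransfer, Matrix.mul_assoc]

lemma trace_prod_transfer (s : PLetter) (W : PWord) :
    ((s :: W).map transfer).prod.trace = ((s :: W).map reducedTransfer).prod.trace := by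
  rw [List.map_cons, List.prod_cons, transfer_eq, Matrix.mul_assoc, rowBasis_mul_prod,
    ← Matrix.mul_assoc, Matrix.trace_mul_comm, ← Matrix.mul_assoc, List.map_cons,
    List.prod_cons, reducedTransfer]

lemma adjointForm_mul (s : PLetter) :
    adjointForm * reducedTransfer s = (reducedTransfer s).transpose * adjointForm := by
  cases s <;> refine Matrix.ext fun i j => ?_ <;> fin_cases i <;> fin_cases j <;>
    simp [reducedTransfer, adjointForm, rowCoords, rowBasis, Matrix.mul_apply,
      Fin.sum_univ_succ] <;> ring

lemma det_adjointForm_ne_zero : adjointForm.det ≠ 0 := by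
  intro h
  have := congrArg (eval 2) h
  simp [adjointForm, Matrix.det_fin_three] at this

lemma adjointForm_mul_prod (W : PWord) :
    adjointForm * (W.map reducedTransfer).prod =
      (W.reverse.map reducedTransfer).prod.transpose * adjointForm := by
  induction W with
  | nil => simp
  | cons s W ih =>
    simp only [List.map_cons, List.prod_cons, List.reverse_cons, List.map_append,
      List.prod_append, List.map_nil, List.prod_nil, mul_one, Matrix.transpose_mul]
    rw [← mul_assoc, adjointForm_mul, mul_assoc, ih, mul_assoc]

lemma trace_prod_reducedTransfer_reverse (W : PWord) :
    (W.map reducedTransfer).prod.trace = (W.reverse.map reducedTransfer).prod.trace := by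
  have key := congrArg (fun M => (adjointForm.adjugate * M).trace) (adjointForm_mul_prod W)
  simp only [← mul_assoc, Matrix.adjugate_mul] at key
  rw [Matrix.trace_mul_comm _ adjointForm, ← mul_assoc, Matrix.mul_adjugate] at key
  simp only [smul_mul_assoc, one_mul, Matrix.trace_smul, Matrix.trace_transpose,
    smul_eq_mul] at key
  exact mul_left_cancel₀ det_adjointForm_ne_zero key

end TraceReversal

section Parsings

open Polynomial

/-- The contribution of a single word. -/
noncomputable def wordVal (w : PWord) : ℤ[X] := C (origCoeff w) * X ^ wordWt w

/-- The total value of the sequences of fewer than `n` words that, continued by the reversal of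
`w`, spell the reversal of `V`. -/
noncomputable def linearVal (n : ℕ) (w V : PWord) : ℤ[X] :=
  ∑ k ∈ Finset.range n, ∑ f : Fin k → Fin 9,
    if ((List.ofFn f).map wordOf).flatten ++ w.reverse = V.reverse then
      parseVal origCoeff ((List.ofFn f).map wordOf)
    else 0

lemma parseVal_append_singleton (L : List PWord) (w : PWord) :
    parseVal origCoeff (L ++ [w]) = wordVal w * parseVal origCoeff L := by
  simp only [parseVal, wordVal, List.map_append, List.prod_append, List.sum_append,
    List.map_cons, List.map_nil, List.prod_singleton, List.sum_singleton, map_mul, pow_add]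
  ring

lemma sum_ofFn_succ {M : Type*} [AddCommMonoid M] (k : ℕ) (φ : List PWord → M) :
    ∑ f : Fin (k + 1) → Fin 9, φ ((List.ofFn f).map wordOf) =
      ∑ i : Fin 9, ∑ f : Fin k → Fin 9, φ ((List.ofFn f).map wordOf ++ [wordOf i]) := by
  rw [← (Fin.snocEquiv (fun _ : Fin (k + 1) => Fin 9)).sum_comp, Fintype.sum_prod_type]
  refine Finset.sum_congr rfl fun i _ => Finset.sum_congr rfl fun f _ => ?_
  rw [List.ofFn_succ_last]
  simp [Fin.snocEquiv]

@[simp]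
lemma linearVal_cons_self (n : ℕ) (a : PLetter) (w V : PWord) :
    linearVal n (a :: w) (a :: V) = linearVal n w V := by
  simp [linearVal, ← List.append_assoc]

lemma linearVal_cons_of_ne (n : ℕ) {a b : PLetter} (h : a ≠ b) (w V : PWord) :
    linearVal n (a :: w) (b :: V) = 0 := by
  simp [linearVal, ← List.append_assoc, h]

@[simp]
lemma linearVal_cons_nil (n : ℕ) (a : PLetter) (w : PWord) : linearVal n (a :: w) [] = 0 := by
  simp [linearVal]

lemma linearVal_succ_nil (n : ℕ) (V : PWord) :
    linearVal (n + 1) [] V = (∑ i, wordVal (wordOf i) * linearVal n (wordOf i).reverse V) +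
      if V = [] then 1 else 0 := by
  rw [linearVal, Finset.sum_range_succ']
  congr 1
  · simp only [linearVal, Finset.mul_sum]
    rw [Finset.sum_comm]
    refine Finset.sum_congr rfl fun k _ => ?_
    rw [sum_ofFn_succ k (fun L => if L.flatten ++ [].reverse = V.reverse then
      parseVal origCoeff L else 0)]
    simp [parseVal_append_singleton]
  · simp [parseVal, eq_comm (a := ([] : PWord))]

/-- The row of the empty remainder in the transfer matrix of the reversal of `V`. -/
noncomputable def parseRow (V : PWord) : Fin 5 → ℤ[X] := (V.reverse.map transfer).prod 0

lemma parseRow_nil (q : Fin 5) : parseRow [] q = if q = 0 then 1 else 0 := by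
  simp [parseRow, Matrix.one_apply, eq_comm]

lemma parseRow_cons (s : PLetter) (V : PWord) (q : Fin 5) :
    parseRow (s :: V) q = ∑ p, parseRow V p * transfer s p q := by
  simp [parseRow, Matrix.mul_apply]

lemma sum_wordOf (φ : PWord → ℤ[X]) : ∑ i, φ (wordOf i) =
    φ [.X] + φ [.X, .A] + φ [.X, .A, .A] + φ [.X, .B, .A] + φ [.A, .X, .A] + φ [.A, .A, .A] +
      φ [.B, .A] + φ [.A, .B, .A] + φ [.X, .X, .A] := by
  simp only [Fin.sum_univ_succ, wordOf]
  simp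
  ring

lemma parseRow_cons_X (V : PWord) : parseRow (.X :: V) =
    ![parseRow V 0, X * parseRow V 0 + parseRow V 4, X * parseRow V 0, X * parseRow V 0,
      -2 * X * parseRow V 0] := by
  funext q
  fin_cases q <;> simp [parseRow_cons, transfer, Fin.sum_univ_succ] <;> ring

lemma parseRow_cons_A (V : PWord) : parseRow (.A :: V) =
    ![parseRow V 1, parseRow V 2, -X * parseRow V 0, -X * parseRow V 0,
      2 * X * parseRow V 0] := by
  funext q
  fin_cases q <;> simp [parseRow_cons, transfer, Fin.sum_univ_succ] <;> ring

lemma parseRow_cons_B (V : PWord) : parseRow (.B :: V) =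
    ![0, -X * parseRow V 0 + parseRow V 3, 0, 0, 0] := by
  funext q
  fin_cases q <;> simp [parseRow_cons, transfer, Fin.sum_univ_succ, mul_comm]

lemma sum_wordVal_mul (φ : PWord → ℤ[X]) : ∑ i, wordVal (wordOf i) * φ (wordOf i) =
    φ [.X] + X * (φ [.X, .A] + φ [.X, .A, .A] + φ [.X, .B, .A] + 2 * φ [.A, .X, .A] -
      φ [.A, .A, .A] - φ [.B, .A] - φ [.A, .B, .A] - 2 * φ [.X, .X, .A]) := by
  rw [sum_wordOf (fun w => wordVal w * φ w)]
  simp [wordVal, origCoeff, wordWt]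
  ring

lemma linearVal_nil_eq (n : ℕ) (V : PWord) (h : V.length < n) :
    linearVal n [] V = parseRow V 0 := by
  induction n generalizing V with
  | zero => omega
  | succ n ih =>
    have ih' : ∀ U : PWord, U.length < V.length → linearVal n [] U = parseRow U 0 :=
      fun U hU => ih U (by omega)
    rw [linearVal_succ_nil, sum_wordVal_mul (fun w => linearVal n w.reverse V)]
    clear h ih
    rcases V with _ | ⟨a, _ | ⟨b, _ | ⟨c, V⟩⟩⟩
    · simp [parseRow_nil]
    · cases a <;> simp [linearVal_cons_of_ne, ih', parseRow_nil, parseRow_cons_X,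
        parseRow_cons_A, parseRow_cons_B]
    · cases a <;> cases b <;> simp [linearVal_cons_of_ne, ih', parseRow_nil, parseRow_cons_X,
        parseRow_cons_A, parseRow_cons_B]
    · have hV := ih' V (by simp; omega)
      cases a <;> cases b <;> cases c <;> simp [linearVal_cons_of_ne, ih', hV, parseRow_cons_X,
        parseRow_cons_A, parseRow_cons_B] <;> ring

lemma sum_linearVal_of_one_lt (n : ℕ) (a : PLetter) (V : PWord) (h : V.length < n) :
    (∑ i, wordVal (wordOf i) * if 1 < (wordOf i).length then
      linearVal n (wordOf i).reverse (a :: V) else 0) = if a = .A then parseRow V 1 else 0 := by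
  rw [sum_wordVal_mul (fun w => if 1 < w.length then linearVal n w.reverse (a :: V) else 0)]
  have hV : ∀ U : PWord, U.length ≤ V.length → linearVal n [] U = parseRow U 0 :=
    fun U hU => linearVal_nil_eq n U (by omega)
  clear h
  rcases V with _ | ⟨b, _ | ⟨c, V⟩⟩
  · cases a <;> simp [linearVal_cons_of_ne, parseRow_nil]
  · cases a <;> cases b <;> simp [linearVal_cons_of_ne, hV, parseRow_nil, parseRow_cons_X,
      parseRow_cons_A, parseRow_cons_B]
  · have hV' := hV V (by simp; omega)
    cases a <;> cases b <;> cases c <;> simp [linearVal_cons_of_ne, hV, hV', parseRow_cons_X,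
      parseRow_cons_A, parseRow_cons_B] <;> ring

lemma sum_linearVal_of_two_lt (n : ℕ) (a b : PLetter) (V : PWord) (h : V.length < n) :
    (∑ i, wordVal (wordOf i) * if 2 < (wordOf i).length then
      linearVal n (wordOf i).reverse (b :: a :: V) else 0) =
      if b = .A then (match a with
        | .A => parseRow V 2 | .B => parseRow V 3 | .X => parseRow V 4) else 0 := by
  rw [sum_wordVal_mul (fun w => if 2 < w.length then linearVal n w.reverse (b :: a :: V) else 0)]
  have hV : ∀ U : PWord, U.length ≤ V.length → linearVal n [] U = parseRow U 0 :=
    fun U hU => linearVal_nil_eq n U (by omega)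
  clear h
  rcases V with _ | ⟨c, V⟩
  · cases a <;> cases b <;> simp [linearVal_cons_of_ne, parseRow_nil]
  · cases a <;> cases b <;> cases c <;> simp [linearVal_cons_of_ne, hV, parseRow_cons_X,
      parseRow_cons_A, parseRow_cons_B] <;> ring

lemma length_wordOf_le (i : Fin 9) : (wordOf i).length ≤ 3 := by
  fin_cases i <;> simp [wordOf]

lemma wordOf_mem_origWords (i : Fin 9) : wordOf i ∈ origWords := by
  fin_cases i <;> simp [wordOf, origWords, tightWords]

lemma isOrigCyclicParsing_append_iff (W : PWord) (r k : ℕ) (f : Fin k → Fin 9) (i : Fin 9) :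
    IsOrigCyclicParsing W r ((List.ofFn f).map wordOf ++ [wordOf i]) ↔
      r < (wordOf i).length ∧
        ((List.ofFn f).map wordOf).flatten ++ wordOf i = W.rotate r := by
  have hmem : ∀ w ∈ (List.ofFn f).map wordOf ++ [wordOf i], w ∈ origWords := by
    intro w hw
    simp only [List.mem_append, List.mem_map, List.mem_singleton] at hw
    rcases hw with ⟨j, -, rfl⟩ | rfl <;> exact wordOf_mem_origWords _
  rw [IsOrigCyclicParsing, and_iff_right hmem]
  simp [and_comm]

/-- The value of the cyclic parsings whose last word ends at position `r`. -/
noncomputable def cyclicValAt (W : PWord) (r : ℕ) : ℤ[X] :=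
  ∑ i, wordVal (wordOf i) * if r < (wordOf i).length then
    linearVal W.length (wordOf i).reverse (W.rotate r).reverse else 0

lemma origCycVal_eq_sum (W : PWord) :
    origCycVal W = ∑ r ∈ Finset.range W.length, cyclicValAt W r := by
  refine Finset.sum_congr rfl fun r _ => ?_
  rw [Finset.sum_range_succ']
  have hzero : ∀ f : Fin 0 → Fin 9, ¬ IsOrigCyclicParsing W r ((List.ofFn f).map wordOf) := by
    rintro f ⟨-, h, -⟩
    simp at h
  simp only [hzero, if_false, Finset.sum_const_zero, add_zero]
  have hsucc : ∀ k, (∑ f : Fin (k + 1) → Fin 9,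
      if IsOrigCyclicParsing W r ((List.ofFn f).map wordOf) then
        parseVal origCoeff ((List.ofFn f).map wordOf) else 0) = _ := fun k =>
    sum_ofFn_succ k (fun L => if IsOrigCyclicParsing W r L then parseVal origCoeff L else 0)
  simp only [hsucc]
  rw [Finset.sum_comm, cyclicValAt]
  refine Finset.sum_congr rfl fun i _ => ?_
  simp only [isOrigCyclicParsing_append_iff, parseVal_append_singleton]
  split_ifs with hr
  · simp [linearVal, hr, Finset.mul_sum]
  · simp [hr]

lemma cyclicValAt_of_three_le (W : PWord) {r : ℕ} (hr : 3 ≤ r) : cyclicValAt W r = 0 := by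
  refine Finset.sum_eq_zero fun i _ => ?_
  rw [if_neg (by have := length_wordOf_le i; omega), mul_zero]

lemma cyclicValAt_zero (a : PLetter) (W : PWord) :
    cyclicValAt (a :: W) 0 = parseRow (a :: W).reverse 0 := by
  rw [← linearVal_nil_eq ((a :: W).length + 1) _ (by simp), linearVal_succ_nil]
  have hpos : ∀ i, 0 < (wordOf i).length := by
    intro i
    fin_cases i <;> simp [wordOf]
  simp [cyclicValAt, hpos]

lemma cyclicValAt_one (a : PLetter) (W : PWord) :
    cyclicValAt (a :: W) 1 = if a = .A then parseRow W.reverse 1 else 0 := by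
  rw [← sum_linearVal_of_one_lt (a :: W).length a W.reverse (by simp)]
  simp [cyclicValAt]

lemma cyclicValAt_two (a b : PLetter) (W : PWord) :
    cyclicValAt (a :: b :: W) 2 = if b = .A then (match a with
        | .A => parseRow W.reverse 2
        | .B => parseRow W.reverse 3
        | .X => parseRow W.reverse 4) else 0 := by
  rw [← sum_linearVal_of_two_lt (a :: b :: W).length a b W.reverse (by simp)]
  simp [cyclicValAt]

lemma trace_prod_transfer_eq_sum (a b : PLetter) (W : PWord) :
    ((a :: b :: W).map transfer).prod.trace =
      cyclicValAt (a :: b :: W) 0 + cyclicValAt (a :: b :: W) 1 +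
        cyclicValAt (a :: b :: W) 2 := by
  rw [cyclicValAt_zero, cyclicValAt_one, cyclicValAt_two]
  simp only [parseRow, List.reverse_reverse, Matrix.trace, Matrix.diag_apply,
    Fin.sum_univ_succ, List.map_cons, List.prod_cons]
  generalize (W.map transfer).prod = M
  cases a <;> cases b <;>
    simp [Matrix.mul_apply, Matrix.vecMul, dotProduct, Fin.sum_univ_succ, transfer]
  ring

lemma origCycVal_eq_trace (a : PLetter) (W : PWord) :
    origCycVal (a :: W) = ((a :: W).map transfer).prod.trace := by
  rw [origCycVal_eq_sum]
  rcases W with _ | ⟨b, W⟩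
  · cases a <;> simp [cyclicValAt_zero, parseRow, Matrix.trace, Fin.sum_univ_succ, transfer]
  · rw [trace_prod_transfer_eq_sum]
    rcases W with _ | ⟨c, W⟩
    · cases a <;> simp [Finset.sum_range_succ, cyclicValAt_two, parseRow_nil]
    · have hlen : (a :: b :: c :: W).length = 3 + W.length := by simp; omega
      rw [hlen, Finset.sum_range_add, Finset.sum_eq_zero (s := Finset.range W.length)
        fun r _ => cyclicValAt_of_three_le _ (by omega)]
      simp [Finset.sum_range_succ]

end Parsings

/-- **Cyclic theorem.**  For every cyclic sentence `S` over `{A, X, B}` one has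
`|S| = |S̄|`, where `S̄` is the reversed cyclic sentence (original puzzle). -/
theorem cyclic_reversal (W : PWord) : origCycVal W = origCycVal W.reverse := by
  rcases h : W.reverse with _ | ⟨b, V⟩
  · rw [List.reverse_eq_nil_iff.mp h]
  · rcases W with _ | ⟨a, W⟩
    · simp at h
    · rw [origCycVal_eq_trace, origCycVal_eq_trace, trace_prod_transfer, trace_prod_transfer,
        trace_prod_reducedTransfer_reverse, h]
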